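/- Let G be the group presented by the generating set S and relation set R of Theorem 2.14 (the presentation of the virtual Thompson group VF) as described in the context. Then G is torsion-free: every element g ∈ G with gⁿ = 1 for some integer n ≥ 1 satisfies g = 1. -/

import Mathlib

/-- The alphabet Σ = {x, v}. -/
inductive Letter : Type
  | x | v
deriving DecidableEq

/-- Words on Σ (possibly empty). -/
abbrev Word := List Letter

/-- A target word t ∈ {xx, xv, vx, vv}, encoded as the pair of its two letters. -/
abbrev Tgt := Letter × Letter

/-- The word (of length two) corresponding to a target. -/
def tw (t : Tgt) : Word := [t.1, t.2]

/-- Index for the three generators of family (i): X_{v→vv}, X_{v→vx}, X_{v→xv}. -/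
inductive G1 : Type
  | vv   -- X_{v→vv}
  | vx   -- X_{v→vx}
  | xv   -- X_{v→xv}
deriving DecidableEq

/-- Index for the four kinds of generators of family (iii):
X_{x→vv,u}, X_{x→vx,u}, X_{v→xx,u}, X_{v→xv,u}. -/
inductive G3 : Type
  | xvv  -- X_{x→vv,u}
  | xvx  -- X_{x→vx,u}
  | vxx  -- X_{v→xx,u}
  | vxv  -- X_{v→xv,u}
deriving DecidableEq

/-- The generating set S of the presentation of the virtual Thompson group VF. -/
inductive Gen : Type
  /-- family (i): X_{v→vv}, X_{v→vx}, X_{v→xv} -/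
  | fam1 : G1 → Gen
  /-- family (ii): X_{a, s→t, u} with a ∈ {x,v}, s ∈ {x,v}, t ∈ {xx,xv,vx,vv}, u any word -/
  | fam2 : Letter → Letter → Tgt → Word → Gen
  /-- family (iii): X_{c, u} with c one of x→vv, x→vx, v→xx, v→xv and u a nonempty word -/
  | fam3 : G3 → {u : Word // u ≠ []} → Gen

/-- The corresponding generator of the free group on S. -/
def X (g : Gen) : FreeGroup Gen := FreeGroup.of g

open Letter in
/-- The relators of the presentation of VF (each relation A·B = C·D becomes the
relator A·B·(C·D)⁻¹). -/
inductive VFRel : FreeGroup Gen → Prop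
  /-- (R1) and (R2): for a ∈ {x, v},
  X_{a,s₁→t₁, p s₂ q} X_{a,s₂→t₂, q} = X_{a,s₂→t₂, q} X_{a,s₁→t₁, p t₂ q}. -/
  | r12 (a s₁ s₂ : Letter) (t₁ t₂ : Tgt) (p q : Word) :
      VFRel (X (.fam2 a s₁ t₁ (p ++ [s₂] ++ q)) * X (.fam2 a s₂ t₂ q) *
        (X (.fam2 a s₂ t₂ q) * X (.fam2 a s₁ t₁ (p ++ tw t₂ ++ q)))⁻¹)
  /-- (R3): X_{x,s→t,q} X_{x→vv, p t q} = X_{x→vv, p s q} X_{v,s→t,q}. -/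
  | r3 (s : Letter) (t : Tgt) (p q : Word) :
      VFRel (X (.fam2 x s t q) * X (.fam3 .xvv ⟨p ++ tw t ++ q, by simp [tw]⟩) *
        (X (.fam3 .xvv ⟨p ++ [s] ++ q, by simp⟩) * X (.fam2 v s t q))⁻¹)
  /-- (R4): X_{x,s→t,q} X_{x→vx, p t q} = X_{x→vx, p s q} X_{v,s→t,q}. -/
  | r4 (s : Letter) (t : Tgt) (p q : Word) :
      VFRel (X (.fam2 x s t q) * X (.fam3 .xvx ⟨p ++ tw t ++ q, by simp [tw]⟩) *
        (X (.fam3 .xvx ⟨p ++ [s] ++ q, by simp⟩) * X (.fam2 v s t q))⁻¹)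
  /-- (R5): X_{v,s→t,q} X_{v→xx, p t q} = X_{v→xx, p s q} X_{x,s→t,q}. -/
  | r5 (s : Letter) (t : Tgt) (p q : Word) :
      VFRel (X (.fam2 v s t q) * X (.fam3 .vxx ⟨p ++ tw t ++ q, by simp [tw]⟩) *
        (X (.fam3 .vxx ⟨p ++ [s] ++ q, by simp⟩) * X (.fam2 x s t q))⁻¹)
  /-- (R6): X_{v,s→t,q} X_{v→xv, p t q} = X_{v→xv, p s q} X_{x,s→t,q}. -/
  | r6 (s : Letter) (t : Tgt) (p q : Word) :
      VFRel (X (.fam2 v s t q) * X (.fam3 .vxv ⟨p ++ tw t ++ q, by simp [tw]⟩) *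
        (X (.fam3 .vxv ⟨p ++ [s] ++ q, by simp⟩) * X (.fam2 x s t q))⁻¹)

/-- The set of relators. -/
def VFrels : Set (FreeGroup Gen) := {g | VFRel g}

/-- The virtual Thompson group VF, as the presented group ⟨S | R⟩. -/
abbrev VF := PresentedGroup VFrels

/-- Torsion-freeness, as a predicate. -/
def TF (G : Type) [Group G] : Prop := ∀ (g : G) (n : ℕ), 1 ≤ n → g ^ n = 1 → g = 1

theorem TF.of_retract {G H : Type} [Group G] [Group H] (i : G →* H) (r : H →* G)
    (hri : ∀ g, r (i g) = g) (hH : TF H) : TF G := by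
  intro g n hn h
  have h1 : i g = 1 := hH (i g) n hn (by rw [← map_pow, h, map_one])
  rw [← hri g, h1, map_one]

theorem TF.freeGroup (α : Type) : TF (FreeGroup α) := by
  intro g n hn h
  exact IsMulTorsionFree.pow_left_injective (M := FreeGroup α) (n := n) (by omega)
    (by simpa using h)

/-- Partially commutative group on `V`, generators related by `C` commute. -/
def raagRels {V : Type} (C : V → V → Prop) : Set (FreeGroup V) :=
  {g | ∃ a b, C a b ∧ g = FreeGroup.of a * FreeGroup.of b * (FreeGroup.of b * FreeGroup.of a)⁻¹}

abbrev Raag {V : Type} (C : V → V → Prop) := PresentedGroup (raagRels C)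

namespace Raag

variable {V : Type} {C : V → V → Prop}

def gen (C : V → V → Prop) (a : V) : Raag C := PresentedGroup.of a

theorem gen_comm {a b : V} (h : C a b) : gen C a * gen C b = gen C b * gen C a := by
  have := PresentedGroup.mk_eq_mk_of_mul_inv_mem (rels := raagRels C)
    (x := FreeGroup.of a * FreeGroup.of b) (y := FreeGroup.of b * FreeGroup.of a) ⟨a, b, h, rfl⟩
  rw [map_mul, map_mul] at this
  exact this

def lift {M : Type} [Group M] (f : V → M) (hf : ∀ a b, C a b → f a * f b = f b * f a) :
    Raag C →* M :=
  PresentedGroup.toGroup (f := f) (by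
    rintro r ⟨a, b, hab, rfl⟩
    simp only [map_mul, map_inv, FreeGroup.lift_apply_of]
    rw [hf a b hab, mul_inv_cancel])

@[simp] theorem lift_gen {M : Type} [Group M] (f : V → M)
    (hf : ∀ a b, C a b → f a * f b = f b * f a) (a : V) : lift f hf (gen C a) = f a :=
  PresentedGroup.toGroup.of _

theorem hom_ext {M : Type} [Group M] {f g : Raag C →* M}
    (h : ∀ a, f (gen C a) = g (gen C a)) : f = g := PresentedGroup.ext h

theorem induct {P : Raag C → Prop} (h1 : P 1) (hg : ∀ a, P (gen C a))
    (hinv : ∀ g, P g → P g⁻¹) (hm : ∀ g h, P g → P h → P (g * h)) (g : Raag C) : P g :=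
  PresentedGroup.generated_by (raagRels C)
    { carrier := {g | P g}, mul_mem' := fun {a b} ha hb => hm a b ha hb, one_mem' := h1,
      inv_mem' := fun {a} ha => hinv a ha } hg g

end Raag

/-- The set of generators of the kernel in the universal construction. -/
def urel {B J : Type} [Group B] (E : B → J → J → Prop) : B × J → B × J → Prop :=
  fun p q => ∃ b, E b p.2 q.2 ∧ p.1 = q.1 * b

abbrev UOm {B J : Type} [Group B] (E : B → J → J → Prop) := Quot (urel E)

section univ

variable {B J : Type} [Group B] (E : B → J → J → Prop) (Cm : J → J → Prop)

def UC : UOm E → UOm E → Prop := fun w w' => ∃ a j j', Cm j j' ∧ w = Quot.mk _ (a, j) ∧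
  w' = Quot.mk _ (a, j')

def uact (b : B) : UOm E → UOm E :=
  Quot.map (fun p => (b * p.1, p.2)) (by
    rintro ⟨a, j⟩ ⟨a', j'⟩ ⟨c, h1, h2⟩
    exact ⟨c, h1, by simp only at h2 ⊢; rw [h2, mul_assoc]⟩)

theorem uact_one (w : UOm E) : uact E 1 w = w := by
  induction w using Quot.ind with | mk p => simp [uact, Quot.map]

theorem uact_mul (b c : B) (w : UOm E) : uact E (b * c) w = uact E b (uact E c w) := by
  induction w using Quot.ind with | mk p => simp [uact, Quot.map, mul_assoc]

def uend (b : B) : Raag (UC E Cm) →* Raag (UC E Cm) :=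
  Raag.lift (fun w => Raag.gen _ (uact E b w)) (by
    rintro _ _ ⟨a, j, j', h, rfl, rfl⟩
    exact Raag.gen_comm ⟨b * a, j, j', h, rfl, rfl⟩)

theorem uend_one : uend E Cm 1 = MonoidHom.id _ :=
  Raag.hom_ext (fun a => by simp [uend, uact_one])

theorem uend_mul (b c : B) : uend E Cm (b * c) = (uend E Cm b).comp (uend E Cm c) :=
  Raag.hom_ext (fun a => by simp [uend, uact_mul])

def uaut : B →* MulAut (Raag (UC E Cm)) where
  toFun b := MonoidHom.toMulEquiv (uend E Cm b) (uend E Cm b⁻¹)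
    (by rw [← uend_mul, inv_mul_cancel, uend_one]) (by rw [← uend_mul, mul_inv_cancel, uend_one])
  map_one' := by
    ext g
    simp [uend_one]
  map_mul' b c := by
    ext g
    simp [uend_mul]

theorem uaut_gen (b : B) (w : UOm E) :
    uaut E Cm b (Raag.gen _ w) = Raag.gen _ (uact E b w) := by
  simp [uaut, uend]

theorem TF.semidirect {N G : Type} [Group N] [Group G] (φ : G →* MulAut N)
    (hN : TF N) (hG : TF G) : TF (N ⋊[φ] G) := by
  intro g n hn h
  have h1 : g.right = 1 := hG _ n hn (by
    have := congrArg SemidirectProduct.rightHom h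
    rw [map_pow, map_one] at this
    exact this)
  have h2 : g = SemidirectProduct.inl g.left := by
    conv_lhs => rw [← SemidirectProduct.inl_left_mul_inr_right g, h1, map_one, mul_one]
  rw [h2, ← map_pow] at h
  have h3 : g.left ^ n = 1 := SemidirectProduct.inl_injective (by rw [h, map_one])
  rw [h2, hN _ n hn h3, map_one]

theorem exists_univ_aux (hB : TF B) (hR : TF (Raag (UC E Cm))) :
    ∃ (T : Type) (_ : Group T) (ι : B →* T) (κ : J → T), TF T ∧
      (∀ b j j', E b j j' → ι b * κ j = κ j' * ι b) ∧
      (∀ j j', Cm j j' → κ j * κ j' = κ j' * κ j) ∧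
      ∀ (M : Type) [Group M] (φ : B →* M) (ψ : J → M),
        (∀ b j j', E b j j' → φ b * ψ j = ψ j' * φ b) →
        (∀ j j', Cm j j' → ψ j * ψ j' = ψ j' * ψ j) →
        ∃ Φ : T →* M, (∀ b, Φ (ι b) = φ b) ∧ (∀ j, Φ (κ j) = ψ j) := by
  refine ⟨Raag (UC E Cm) ⋊[uaut E Cm] B, inferInstance, SemidirectProduct.inr,
    fun j => SemidirectProduct.inl (Raag.gen _ (Quot.mk _ (1, j))), TF.semidirect _ hR hB, ?_, ?_, ?_⟩
  · intro b j j' h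
    have h1 := SemidirectProduct.inl_aut (φ := uaut E Cm) b (Raag.gen _ (Quot.mk _ (1, j)))
    have h2 : uact E b (Quot.mk _ (1, j)) = Quot.mk _ (1, j') :=
      Quot.sound ⟨b, h, by simp⟩
    rw [uaut_gen, h2] at h1
    beta_reduce
    rw [h1, map_inv, inv_mul_cancel_right]
  · intro j j' h
    rw [← map_mul, ← map_mul, Raag.gen_comm ⟨1, j, j', h, rfl, rfl⟩]
  · intro M _ φ ψ h1 h2
    let f : UOm E → M := Quot.lift (fun p => φ p.1 * ψ p.2 * (φ p.1)⁻¹) (by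
      rintro ⟨a, j⟩ ⟨a', j'⟩ ⟨b, hb, h⟩
      simp only at h hb ⊢
      have := h1 b j j' hb
      rw [h, map_mul, mul_assoc (φ a'), this]
      group)
    have hf : ∀ b w, f (uact E b w) = φ b * f w * (φ b)⁻¹ := by
      intro b w
      induction w using Quot.ind with
      | mk p =>
        change φ (b * p.1) * ψ p.2 * (φ (b * p.1))⁻¹ = φ b * (φ p.1 * ψ p.2 * (φ p.1)⁻¹) * (φ b)⁻¹
        rw [map_mul]
        group
    have hfc : ∀ a b, UC E Cm a b → f a * f b = f b * f a := by
      rintro _ _ ⟨a, j, j', h, rfl, rfl⟩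
      change (φ a * ψ j * (φ a)⁻¹) * (φ a * ψ j' * (φ a)⁻¹) =
        (φ a * ψ j' * (φ a)⁻¹) * (φ a * ψ j * (φ a)⁻¹)
      have := h2 j j' h
      calc _ = φ a * (ψ j * ψ j') * (φ a)⁻¹ := by group
        _ = _ := by rw [this]; group
    refine ⟨SemidirectProduct.lift (Raag.lift f hfc) φ ?_, ?_, ?_⟩
    · intro b
      refine Raag.hom_ext fun w => ?_
      simp [uaut_gen, hf]
    · intro b
      simp
    · intro j
      simp [f]

end univ

theorem Raag.tf_of_empty {V : Type} (C : V → V → Prop) (h : ∀ a b, ¬ C a b) : TF (Raag C) := by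
  refine TF.of_retract (Raag.lift (fun a => FreeGroup.of a) (fun a b hab => (h a b hab).elim))
    (FreeGroup.lift (Raag.gen C)) ?_ (TF.freeGroup V)
  intro g
  have : (FreeGroup.lift (Raag.gen C)).comp (Raag.lift (fun a => FreeGroup.of a)
      (fun a b hab => (h a b hab).elim)) = MonoidHom.id _ := Raag.hom_ext fun a => by simp
  exact DFunLike.congr_fun this g

theorem Raag.tf_option {V : Type} (h : ∀ C : V → V → Prop, TF (Raag C))
    (C : Option V → Option V → Prop) : TF (Raag C) := by
  let C' : V → V → Prop := fun a b => C (some a) (some b)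
  let E : Raag C' → Unit → Unit → Prop := fun b _ _ =>
    ∃ a, (C (some a) none ∨ C none (some a)) ∧ b = Raag.gen C' a
  obtain ⟨T, _, ι, κ, hT, hE, -, hl⟩ := exists_univ_aux E (fun _ _ => False) (h C')
    (Raag.tf_of_empty _ (by rintro a b ⟨_, _, _, h, _⟩; exact h))
  let inc : Raag C' →* Raag C := Raag.lift (fun a => Raag.gen C (some a))
    (fun a b hab => Raag.gen_comm hab)
  obtain ⟨Φ, hΦ1, hΦ2⟩ := hl (Raag C) inc (fun _ => Raag.gen C none)
    (by
      rintro b - - ⟨a, h | h, rfl⟩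
      · simpa [inc] using Raag.gen_comm h
      · simpa [inc] using (Raag.gen_comm h).symm)
    (by intro _ _ h; exact h.elim)
  let f : Option V → T := fun o => o.elim (κ ()) (fun a => ι (Raag.gen C' a))
  have hf : ∀ a b, C a b → f a * f b = f b * f a := by
    rintro (_ | a) (_ | b) hab
    · rfl
    · exact (hE _ () () ⟨b, Or.inr hab, rfl⟩).symm
    · exact hE _ () () ⟨a, Or.inl hab, rfl⟩
    · change ι _ * ι _ = ι _ * ι _
      rw [← map_mul, ← map_mul, Raag.gen_comm (C := C') hab]
  refine TF.of_retract (Raag.lift f hf) Φ (fun g => ?_) hT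
  have : Φ.comp (Raag.lift f hf) = MonoidHom.id _ := Raag.hom_ext fun a => by
    cases a with
    | none => simp [f, hΦ2]
    | some a => simp [f, hΦ1, inc]
  exact DFunLike.congr_fun this g

theorem Raag.tf_finite (V : Type) [Finite V] : ∀ C : V → V → Prop, TF (Raag C) := by
  refine Finite.induction_empty_option (P := fun V : Type => ∀ C : V → V → Prop, TF (Raag C))
    ?_ ?_ ?_ V
  · intro α β e h C
    let C' : α → α → Prop := fun a b => C (e a) (e b)
    have hc : ∀ a b, C a b → C' (e.symm a) (e.symm b) := by intro a b h; simpa [C'] using h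
    refine TF.of_retract (Raag.lift (C := C) (fun a => Raag.gen C' (e.symm a))
      (fun a b hab => Raag.gen_comm (hc a b hab)))
      (Raag.lift (C := C') (fun a => Raag.gen C (e a)) (fun a b hab => Raag.gen_comm hab))
      (fun g => ?_) (h C')
    induction g using Raag.induct with
    | h1 => simp
    | hg a => simp
    | hinv g hg => simpa using hg
    | hm g h hg hh => rw [map_mul, map_mul, hg, hh]
  · intro C
    exact Raag.tf_of_empty C (fun a => a.elim)
  · intro α _ h C
    exact Raag.tf_option h C

open Classical in
theorem Raag.tf {V : Type} (C : V → V → Prop) : TF (Raag C) := by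
  let CS (S : Finset V) : S → S → Prop := fun a b => C a b
  let r (S : Finset V) : Raag C →* Raag (CS S) :=
    Raag.lift (fun a => if h : a ∈ S then Raag.gen (CS S) ⟨a, h⟩ else 1) (by
      intro a b hab
      by_cases ha : a ∈ S
      · by_cases hb : b ∈ S
        · simp only [ha, hb, dif_pos]
          exact Raag.gen_comm (C := CS S) hab
        · simp [hb]
      · simp [ha])
  let i (S : Finset V) : Raag (CS S) →* Raag C :=
    Raag.lift (fun a => Raag.gen C a) (fun a b hab => Raag.gen_comm hab)
  have key : ∀ g : Raag C, ∃ S : Finset V, ∀ S', S ⊆ S' → i S' (r S' g) = g := by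
    intro g
    induction g using Raag.induct with
    | h1 => exact ⟨∅, fun S' _ => by simp⟩
    | hg a =>
      refine ⟨{a}, fun S' hS => ?_⟩
      have ha : a ∈ S' := hS (by simp)
      simp [i, r, ha]
    | hinv g hg =>
      obtain ⟨S, hS⟩ := hg
      exact ⟨S, fun S' h => by rw [map_inv, map_inv, hS S' h]⟩
    | hm g h hg hh =>
      obtain ⟨S, hS⟩ := hg
      obtain ⟨S2, hS2⟩ := hh
      refine ⟨S ∪ S2, fun S' h => ?_⟩
      rw [map_mul, map_mul, hS S' (Finset.union_subset_left h), hS2 S' (Finset.union_subset_right h)]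
  intro g n hn h
  obtain ⟨S, hS⟩ := key g
  have h1 : r S g = 1 := Raag.tf_finite S (CS S) _ n hn (by rw [← map_pow, h, map_one])
  rw [← hS S subset_rfl, h1, map_one]

theorem exists_univ {B J : Type} [Group B] (E : B → J → J → Prop) (Cm : J → J → Prop)
    (hB : TF B) :
    ∃ (T : Type) (_ : Group T) (ι : B →* T) (κ : J → T), TF T ∧
      (∀ b j j', E b j j' → ι b * κ j = κ j' * ι b) ∧
      (∀ j j', Cm j j' → κ j * κ j' = κ j' * κ j) ∧
      ∀ (M : Type) [Group M] (φ : B →* M) (ψ : J → M),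
        (∀ b j j', E b j j' → φ b * ψ j = ψ j' * φ b) →
        (∀ j j', Cm j j' → ψ j * ψ j' = ψ j' * ψ j) →
        ∃ Φ : T →* M, (∀ b, Φ (ι b) = φ b) ∧ (∀ j, Φ (κ j) = ψ j) :=
  exists_univ_aux E Cm hB (Raag.tf _)

/-- Relators of the standard infinite presentation of Thompson's group `F`. -/
def thRels : Set (FreeGroup ℕ) :=
  {g | ∃ i j, i < j ∧ g = FreeGroup.of j * FreeGroup.of i * (FreeGroup.of i * FreeGroup.of (j + 1))⁻¹}

abbrev Th := PresentedGroup thRels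

namespace Th

def x (n : ℕ) : Th := PresentedGroup.of n

theorem rel {i j : ℕ} (h : i < j) : x j * x i = x i * x (j + 1) := by
  have := PresentedGroup.mk_eq_mk_of_mul_inv_mem (rels := thRels)
    (x := FreeGroup.of j * FreeGroup.of i) (y := FreeGroup.of i * FreeGroup.of (j + 1))
    ⟨i, j, h, rfl⟩
  rw [map_mul, map_mul] at this
  exact this

def lift {M : Type} [Group M] (f : ℕ → M) (hf : ∀ i j, i < j → f j * f i = f i * f (j + 1)) :
    Th →* M :=
  PresentedGroup.toGroup (f := f) (by
    rintro r ⟨a, b, hab, rfl⟩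
    simp only [map_mul, map_inv, FreeGroup.lift_apply_of]
    rw [hf a b hab, mul_inv_cancel])

@[simp] theorem lift_x {M : Type} [Group M] (f : ℕ → M)
    (hf : ∀ i j, i < j → f j * f i = f i * f (j + 1)) (n : ℕ) : lift f hf (x n) = f n :=
  PresentedGroup.toGroup.of _

theorem induct {P : Th → Prop} (h1 : P 1) (hg : ∀ a, P (x a))
    (hinv : ∀ g, P g → P g⁻¹) (hm : ∀ g h, P g → P h → P (g * h)) (g : Th) : P g :=
  PresentedGroup.generated_by thRels
    { carrier := {g | P g}, mul_mem' := fun {a b} ha hb => hm a b ha hb, one_mem' := h1,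
      inv_mem' := fun {a} ha => hinv a ha } hg g

/-- The basic contraction. -/
def cf (n : ℕ) (t : ℚ) : ℚ := if t ≤ n then t else if t ≤ n + 2 then n + (t - n) / 2 else t - 1

def ef (n : ℕ) (t : ℚ) : ℚ := if t ≤ n then t else if t ≤ n + 1 then n + (t - n) * 2 else t + 1

theorem cf_ef (n : ℕ) (t : ℚ) : cf n (ef n t) = t := by
  unfold cf ef
  split_ifs <;> linarith

theorem ef_cf (n : ℕ) (t : ℚ) : ef n (cf n t) = t := by
  unfold cf ef
  split_ifs <;> linarith

theorem cf_strictMono (n : ℕ) : StrictMono (cf n) := by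
  intro a b h
  unfold cf
  split_ifs <;> linarith

def c (n : ℕ) : ℚ ≃o ℚ :=
  StrictMono.orderIsoOfRightInverse (cf n) (cf_strictMono n) (ef n) (cf_ef n)

theorem c_apply (n : ℕ) (t : ℚ) : c n t = cf n t := rfl

theorem c_rel (i j : ℕ) (h : i < j) : c j * c i = c i * c (j + 1) := by
  ext t
  rw [RelIso.mul_apply, RelIso.mul_apply]
  simp only [c_apply]
  have h' : (i : ℚ) + 1 ≤ j := by exact_mod_cast h
  unfold cf
  push_cast
  split_ifs <;> linarith

def act : Th →* (ℚ ≃o ℚ) := lift c c_rel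

theorem act_x (n : ℕ) : act (x n) = c n := lift_x _ _ _

def shift : Th →* Th := lift (fun n => x (n + 1)) (fun i j h => rel (by omega))

theorem shift_x (n : ℕ) : shift (x n) = x (n + 1) := lift_x _ _ _

theorem act_shift (g : Th) : ∀ t, act (shift g) (t + 1) = act g t + 1 := by
  induction g using induct with
  | h1 => intro t; simp
  | hg a =>
    intro t
    rw [shift_x, act_x, act_x, c_apply, c_apply]
    unfold cf
    push_cast
    split_ifs <;> linarith
  | hinv g hg =>
    intro t
    have h := hg ((act g)⁻¹ t)
    rw [RelIso.apply_inv_self] at h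
    rw [map_inv, map_inv, ← h, RelIso.inv_apply_self, map_inv]
  | hm g h hg hh =>
    intro t
    rw [map_mul, map_mul, RelIso.mul_apply, hh, hg, map_mul, RelIso.mul_apply]

theorem act_zero (g : Th) : act g 0 = 0 := by
  induction g using induct with
  | h1 => simp
  | hg a =>
    rw [act_x, c_apply]
    unfold cf
    simp
  | hinv g hg =>
    rw [map_inv]
    conv_lhs => rw [← hg]
    rw [RelIso.inv_apply_self]
  | hm g h hg hh => rw [map_mul, RelIso.mul_apply, hh, hg]

theorem act_x0_pow (a : ℕ) : act (x 0 ^ a) 1 = (1 / 2) ^ a := by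
  induction a with
  | zero => simp
  | succ a ih =>
    rw [pow_succ', map_mul, RelIso.mul_apply, ih, act_x, c_apply]
    have h1 : (0 : ℚ) < (1 / 2) ^ a := by positivity
    have h2 : ((1 : ℚ) / 2) ^ a ≤ 1 := pow_le_one₀ (by norm_num) (by norm_num)
    unfold cf
    push_cast
    rw [if_neg (by linarith), if_pos (by linarith), pow_succ]
    ring

theorem act_head (a : ℕ) (g : Th) : act (x 0 ^ a * shift g) 1 = (1 / 2) ^ a := by
  have h := act_shift g 0
  rw [act_zero, zero_add] at h
  rw [map_mul, RelIso.mul_apply, h, act_x0_pow]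

def nf : List ℕ → Th
  | [] => 1
  | a :: l => x 0 ^ a * shift (nf l)

theorem nf_eq (l : List ℕ) : nf l = x 0 ^ (l.headD 0) * shift (nf l.tail) := by
  cases l <;> simp [nf]

theorem nf_inj : ∀ (k : ℕ) (l l' : List ℕ), l.length ≤ k → l'.length ≤ k →
    act (nf l) = act (nf l') → nf l = nf l' := by
  intro k
  induction k with
  | zero =>
    intro l l' h h' _
    rw [List.length_eq_zero_iff.1 (by omega : l.length = 0),
      List.length_eq_zero_iff.1 (by omega : l'.length = 0)]
  | succ k ih =>
    intro l l' h h' hact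
    rw [nf_eq l, nf_eq l'] at hact ⊢
    have h0 : l.headD 0 = l'.headD 0 := by
      have := DFunLike.congr_fun hact 1
      rw [act_head, act_head] at this
      exact pow_right_injective₀ (a := (1 / 2 : ℚ)) (by norm_num) (by norm_num) this
    rw [h0] at hact ⊢
    rw [map_mul, map_mul] at hact
    have h1 := mul_left_cancel hact
    have h2 : act (nf l.tail) = act (nf l'.tail) := by
      ext t
      have := DFunLike.congr_fun h1 (t + 1)
      rw [act_shift, act_shift] at this
      linarith
    rw [ih _ _ (by simp; omega) (by simp; omega) h2]

theorem x_mul_pow (j a : ℕ) : x (j + 1) * x 0 ^ a = x 0 ^ a * x (j + 1 + a) := by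
  induction a generalizing j with
  | zero => simp
  | succ a ih =>
    rw [pow_succ', ← mul_assoc, rel (by omega), mul_assoc, ih, mul_assoc]
    congr 3
    omega

theorem x_nf_nil (j : ℕ) : ∃ l, x j = nf l := by
  induction j with
  | zero => exact ⟨[1], by simp [nf]⟩
  | succ j ih =>
    obtain ⟨l, hl⟩ := ih
    exact ⟨0 :: l, by simp [nf, ← hl, shift_x]⟩

theorem x_mul_nf (l : List ℕ) : ∀ j, ∃ l', x j * nf l = nf l' := by
  induction l with
  | nil =>
    intro j
    simpa [nf] using x_nf_nil j
  | cons a l ih =>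
    intro j
    cases j with
    | zero => exact ⟨(a + 1) :: l, by simp [nf, pow_succ', mul_assoc]⟩
    | succ j =>
      obtain ⟨l', hl'⟩ := ih (j + a)
      refine ⟨a :: l', ?_⟩
      rw [nf, nf, ← mul_assoc, x_mul_pow, ← hl', map_mul, shift_x, mul_assoc]
      congr 3
      omega

def wd (w : List ℕ) : Th := (w.map x).prod

theorem wd_nf (w : List ℕ) : ∃ l, wd w = nf l := by
  induction w with
  | nil => exact ⟨[], by simp [wd, nf]⟩
  | cons j w ih =>
    obtain ⟨l, hl⟩ := ih
    obtain ⟨l', hl'⟩ := x_mul_nf l j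
    exact ⟨l', by rw [← hl', ← hl]; simp [wd]⟩

theorem inv_wd (w : List ℕ) : ∀ j, ∃ w' w'', (x j)⁻¹ * wd w = wd w' * (wd w'')⁻¹ := by
  induction w with
  | nil => intro j; exact ⟨[], [j], by simp [wd]⟩
  | cons i w ih =>
    intro j
    have hc : wd (i :: w) = x i * wd w := by simp [wd]
    rcases lt_trichotomy i j with h | h | h
    · obtain ⟨w', w'', e⟩ := ih (j + 1)
      refine ⟨i :: w', w'', ?_⟩
      have h1 : (x j)⁻¹ * x i = x i * (x (j + 1))⁻¹ := by
        rw [inv_mul_eq_iff_eq_mul, ← mul_assoc, rel h, mul_inv_cancel_right]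
      rw [hc, ← mul_assoc, h1, mul_assoc, e]
      simp [wd, mul_assoc]
    · subst h
      exact ⟨w, [], by rw [hc]; simp [wd]⟩
    · obtain ⟨w', w'', e⟩ := ih j
      refine ⟨(i + 1) :: w', w'', ?_⟩
      have h1 : (x j)⁻¹ * x i = x (i + 1) * (x j)⁻¹ := by
        rw [inv_mul_eq_iff_eq_mul, ← mul_assoc, ← rel h, mul_inv_cancel_right]
      rw [hc, ← mul_assoc, h1, mul_assoc, e]
      simp [wd, mul_assoc]

theorem exists_frac (g : Th) : ∃ p q, g = wd p * (wd q)⁻¹ := by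
  have key : ∀ g : Th, (∀ p q, ∃ p' q', g * (wd p * (wd q)⁻¹) = wd p' * (wd q')⁻¹) ∧
      (∀ p q, ∃ p' q', g⁻¹ * (wd p * (wd q)⁻¹) = wd p' * (wd q')⁻¹) := by
    intro g
    induction g using induct with
    | h1 => exact ⟨fun p q => ⟨p, q, by simp⟩, fun p q => ⟨p, q, by simp⟩⟩
    | hg a =>
      refine ⟨fun p q => ⟨a :: p, q, by simp [wd, mul_assoc]⟩, fun p q => ?_⟩
      obtain ⟨w', w'', e⟩ := inv_wd p a
      refine ⟨w', q ++ w'', ?_⟩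
      rw [← mul_assoc, e]
      simp [wd, mul_assoc]
    | hinv g hg => exact ⟨hg.2, by simpa using hg.1⟩
    | hm g h hg hh =>
      refine ⟨fun p q => ?_, fun p q => ?_⟩
      · obtain ⟨p1, q1, e1⟩ := hh.1 p q
        obtain ⟨p2, q2, e2⟩ := hg.1 p1 q1
        exact ⟨p2, q2, by rw [mul_assoc, e1, e2]⟩
      · obtain ⟨p1, q1, e1⟩ := hg.2 p q
        obtain ⟨p2, q2, e2⟩ := hh.2 p1 q1
        exact ⟨p2, q2, by rw [mul_inv_rev, mul_assoc, e1, e2]⟩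
  obtain ⟨p, q, e⟩ := (key g).1 [] []
  exact ⟨p, q, by simpa [wd] using e⟩

theorem orderIso_tf (f : ℚ ≃o ℚ) (n : ℕ) (hn : 1 ≤ n) (h : f ^ n = 1) : f = 1 := by
  ext t
  rw [RelIso.one_apply]
  by_contra hne
  obtain ⟨k, rfl⟩ : ∃ k, n = k + 1 := ⟨n - 1, by omega⟩
  have ht := DFunLike.congr_fun h t
  rw [RelIso.one_apply] at ht
  rcases lt_or_gt_of_ne hne with hlt | hlt
  · have : ∀ k : ℕ, (f ^ (k + 1)) t < t := by
      intro k
      induction k with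
      | zero => simpa using hlt
      | succ k ih =>
        rw [pow_succ', RelIso.mul_apply]
        exact (f.strictMono ih).trans hlt
    exact absurd ht (this k).ne
  · have : ∀ k : ℕ, t < (f ^ (k + 1)) t := by
      intro k
      induction k with
      | zero => simpa using hlt
      | succ k ih =>
        rw [pow_succ', RelIso.mul_apply]
        exact hlt.trans (f.strictMono ih)
    exact absurd ht (this k).ne'

theorem tf : TF Th := by
  intro g n hn h
  have h1 : act g = 1 := orderIso_tf _ n hn (by rw [← map_pow, h, map_one])
  obtain ⟨p, q, rfl⟩ := exists_frac g
  obtain ⟨l, hl⟩ := wd_nf p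
  obtain ⟨l', hl'⟩ := wd_nf q
  rw [hl, hl'] at h1 ⊢
  rw [map_mul, map_inv, mul_inv_eq_one] at h1
  rw [nf_inj (max l.length l'.length) l l' (le_max_left _ _) (le_max_right _ _) h1, mul_inv_cancel]

end Th

/-- A system of elements satisfying the relations of the split presentation of `VF`. -/
structure VData (T : Type) [Group T] where
  X : ℕ → T
  S : Letter → Tgt → ℕ → T
  L : Letter → Tgt → ℕ → T
  XX : ∀ {m n}, m < n → X n * X m = X m * X (n + 1)
  XS_hi : ∀ {m n} s t, m < n → X m * S s t (n + 1) = S s t n * X m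
  XS_lo : ∀ {m n} s t, n < m → X m * S s t n = S s t n * X m
  XL : ∀ {m n} s t, m < n → X m * L s t (n + 1) = L s t n * X m
  SS : ∀ {m n} s t s' t', m ≠ n → S s t m * S s' t' n = S s' t' n * S s t m
  SL : ∀ {m n} s t s' t', m < n → S s t m * L s' t' n = L s' t' n * S s t m

namespace VData

variable {T : Type} [Group T] (D : VData T)

def R (s : Letter) (t : Tgt) (n : ℕ) : T := D.S s t n * D.X n

theorem RR {m n : ℕ} (s t s' t') (h : m < n) :
    D.R s t n * D.R s' t' m = D.R s' t' m * D.R s t (n + 1) := by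
  unfold R
  calc D.S s t n * D.X n * (D.S s' t' m * D.X m)
      = D.S s t n * (D.X n * D.S s' t' m) * D.X m := by group
    _ = (D.S s t n * D.S s' t' m) * (D.X n * D.X m) := by rw [D.XS_lo s' t' h]; group
    _ = D.S s' t' m * (D.S s t n * D.X m) * D.X (n + 1) := by
        rw [D.SS s t s' t' h.ne', D.XX h]; group
    _ = _ := by rw [← D.XS_hi s t h]; group

theorem LR {m n : ℕ} (s t s' t') (h : m < n) :
    D.L s t n * D.R s' t' m = D.R s' t' m * D.L s t (n + 1) := by
  unfold R
  rw [← mul_assoc, ← D.SL s' t' s t h, mul_assoc, ← D.XL s t h, mul_assoc]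

open Letter in
/-- Image of the path in the spanning tree from the base word to the word `a :: u`. -/
def th (a : Letter) : Word → T
  | [] => match a with
    | x => 1
    | v => D.L x (x, x) 0 * (D.L v (x, x) 0)⁻¹
  | [b] => D.L x (a, b) 0
  | b :: c :: u => th a (c :: u) * D.L a (a, b) (u.length + 1)

theorem th_cons (a b : Letter) (w : Word) (hw : w ≠ []) :
    D.th a (b :: w) = D.th a w * D.L a (a, b) w.length := by
  cases w with
  | nil => exact (hw rfl).elim
  | cons c u => rfl

/-- Image of an edge not touching the first letter. -/
def E (a s : Letter) (t : Tgt) (u : Word) : T :=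
  D.th a ([s] ++ u) * D.R s t u.length * (D.th a (tw t ++ u))⁻¹

theorem E_eq (a s : Letter) (t : Tgt) (p u : Word) :
    D.E a s t u = D.th a (p ++ [s] ++ u) * D.R s t u.length * (D.th a (p ++ tw t ++ u))⁻¹ := by
  induction p with
  | nil => rfl
  | cons b p ih =>
    rw [ih]
    simp only [List.cons_append]
    rw [D.th_cons a b (p ++ [s] ++ u) (by simp), D.th_cons a b (p ++ tw t ++ u) (by simp [tw])]
    have h1 : (p ++ tw t ++ u).length = (p ++ [s] ++ u).length + 1 := by
      simp [tw]; omega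
    have h2 := D.LR a (a, b) s t (m := u.length) (n := (p ++ [s] ++ u).length) (by simp; omega)
    rw [h1, mul_inv_rev, mul_assoc (D.th a _) (D.L _ _ _), h2]
    group

/-- Image of an edge at the first letter. -/
def EL (s : Letter) (t : Tgt) (u : Word) : T :=
  D.th s u * D.L s t u.length * (D.th t.1 (t.2 :: u))⁻¹

theorem E_EL (a s : Letter) (t' t : Tgt) (p q : Word) :
    D.E a s t q * D.EL a t' (p ++ tw t ++ q) = D.EL a t' (p ++ [s] ++ q) * D.E t'.1 s t q := by
  rw [D.E_eq a s t p q, D.E_eq t'.1 s t (t'.2 :: p) q]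
  unfold EL
  simp only [List.cons_append]
  have h1 : (p ++ tw t ++ q).length = (p ++ [s] ++ q).length + 1 := by
    simp [tw]; omega
  have h2 := D.LR a t' s t (m := q.length) (n := (p ++ [s] ++ q).length) (by simp; omega)
  rw [h1]
  calc _ = D.th a (p ++ [s] ++ q) * (D.R s t q.length * D.L a t' ((p ++ [s] ++ q).length + 1)) *
        (D.th t'.1 (t'.2 :: (p ++ tw t ++ q)))⁻¹ := by group
    _ = _ := by rw [← h2]; group

theorem E_E (a s₁ s₂ : Letter) (t₁ t₂ : Tgt) (p q : Word) :
    D.E a s₁ t₁ (p ++ [s₂] ++ q) * D.E a s₂ t₂ q =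
      D.E a s₂ t₂ q * D.E a s₁ t₁ (p ++ tw t₂ ++ q) := by
  have e1 := D.E_eq a s₂ t₂ (tw t₁ ++ p) q
  have e2 := D.E_eq a s₂ t₂ ([s₁] ++ p) q
  have h1 : (p ++ tw t₂ ++ q).length = (p ++ [s₂] ++ q).length + 1 := by
    simp [tw]; omega
  have h2 := D.RR s₁ t₁ s₂ t₂ (m := q.length) (n := (p ++ [s₂] ++ q).length) (by simp; omega)
  conv_lhs => rw [e1]
  conv_rhs => rw [e2]
  unfold E
  rw [h1]
  simp only [List.append_assoc] at h2 ⊢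
  calc _ = D.th a ([s₁] ++ (p ++ ([s₂] ++ q))) *
        (D.R s₁ t₁ (p ++ ([s₂] ++ q)).length * D.R s₂ t₂ q.length) *
        (D.th a (tw t₁ ++ (p ++ (tw t₂ ++ q))))⁻¹ := by group
    _ = _ := by rw [h2]; group

open Letter in
def genMap : Gen → T
  | .fam1 .vv => D.EL v (v, v) []
  | .fam1 .vx => D.EL v (v, x) []
  | .fam1 .xv => D.EL v (x, v) []
  | .fam2 a s t u => D.E a s t u
  | .fam3 .xvv u => D.EL x (v, v) u
  | .fam3 .xvx u => D.EL x (v, x) u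
  | .fam3 .vxx u => D.EL v (x, x) u
  | .fam3 .vxv u => D.EL v (x, v) u

def hom : VF →* T :=
  PresentedGroup.toGroup (f := D.genMap) (by
    intro r hr
    induction (show VFRel r from hr) with
    | r12 a s₁ s₂ t₁ t₂ p q =>
      simp only [_root_.X, map_mul, map_inv, FreeGroup.lift_apply_of, mul_inv_eq_one]
      exact D.E_E a s₁ s₂ t₁ t₂ p q
    | r3 s t p q =>
      simp only [_root_.X, map_mul, map_inv, FreeGroup.lift_apply_of, mul_inv_eq_one]
      exact D.E_EL _ s _ t p q
    | r4 s t p q =>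
      simp only [_root_.X, map_mul, map_inv, FreeGroup.lift_apply_of, mul_inv_eq_one]
      exact D.E_EL _ s _ t p q
    | r5 s t p q =>
      simp only [_root_.X, map_mul, map_inv, FreeGroup.lift_apply_of, mul_inv_eq_one]
      exact D.E_EL _ s _ t p q
    | r6 s t p q =>
      simp only [_root_.X, map_mul, map_inv, FreeGroup.lift_apply_of, mul_inv_eq_one]
      exact D.E_EL _ s _ t p q)

theorem hom_of (g : Gen) : D.hom (PresentedGroup.of g) = D.genMap g :=
  PresentedGroup.toGroup.of _

end VData

namespace VFP

open Letter

def gn (g : Gen) : VF := PresentedGroup.of g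

theorem rel_eq {A B C D : Gen} (h : VFRel (X A * X B * (X C * X D)⁻¹)) :
    gn A * gn B = gn C * gn D := by
  have := PresentedGroup.mk_eq_mk_of_mul_inv_mem (rels := VFrels)
    (x := X A * X B) (y := X C * X D) h
  rw [map_mul, map_mul] at this
  exact this

def Y (a s : Letter) (t : Tgt) (u : Word) : VF := gn (.fam2 a s t u)

/-- The element of `VF` corresponding to the edge rewriting the first letter. -/
def Xl : Letter → Tgt → Word → VF
  | v, (v, v), [] => gn (.fam1 .vv)
  | v, (v, x), [] => gn (.fam1 .vx)
  | v, (x, v), [] => gn (.fam1 .xv)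
  | _, _, [] => 1
  | x, (v, v), b :: u => gn (.fam3 .xvv ⟨b :: u, by simp⟩)
  | x, (v, x), b :: u => gn (.fam3 .xvx ⟨b :: u, by simp⟩)
  | v, (x, x), b :: u => gn (.fam3 .vxx ⟨b :: u, by simp⟩)
  | v, (x, v), b :: u => gn (.fam3 .vxv ⟨b :: u, by simp⟩)
  | x, (x, _), _ :: _ => 1
  | v, (v, _), _ :: _ => 1

/-- Naturality of a family of elements indexed by words. -/
def NatF (a b : Letter) (N : Word → VF) : Prop :=
  ∀ p s t q, Y a s t q * N (p ++ tw t ++ q) = N (p ++ [s] ++ q) * Y b s t q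

theorem natF_Y (a s : Letter) (t : Tgt) : NatF a a (Y a s t) := by
  intro p s' t' q
  exact (rel_eq (VFRel.r12 a s s' t t' p q)).symm

theorem natF_one (a : Letter) : NatF a a (fun _ => 1) := by
  intro p s t q
  simp

theorem natF_Xl (s : Letter) (t : Tgt) : NatF s t.1 (Xl s t) := by
  intro p s' t' q
  obtain ⟨t1, t2⟩ := t
  cases s <;> cases t1 <;> cases t2
  · cases p <;> simp [Xl, tw]
  · cases p <;> simp [Xl, tw]
  · cases p with
    | nil => exact rel_eq (VFRel.r4 s' t' [] q)
    | cons b p => exact rel_eq (VFRel.r4 s' t' (b :: p) q)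
  · cases p with
    | nil => exact rel_eq (VFRel.r3 s' t' [] q)
    | cons b p => exact rel_eq (VFRel.r3 s' t' (b :: p) q)
  · cases p with
    | nil => exact rel_eq (VFRel.r5 s' t' [] q)
    | cons b p => exact rel_eq (VFRel.r5 s' t' (b :: p) q)
  · cases p with
    | nil => exact rel_eq (VFRel.r6 s' t' [] q)
    | cons b p => exact rel_eq (VFRel.r6 s' t' (b :: p) q)
  · cases p <;> simp [Xl, tw]
  · cases p <;> simp [Xl, tw]

theorem NatF.mul {a b c : Letter} {N M : Word → VF} (hN : NatF a b N) (hM : NatF b c M) :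
    NatF a c (fun u => N u * M u) := by
  intro p s t q
  beta_reduce
  rw [← mul_assoc, hN, mul_assoc, hM, mul_assoc]

theorem NatF.inv {a b : Letter} {N : Word → VF} (hN : NatF a b N) :
    NatF b a (fun u => (N u)⁻¹) := by
  intro p s t q
  beta_reduce
  rw [mul_inv_eq_iff_eq_mul, mul_assoc, hN, inv_mul_cancel_left]

theorem NatF.cons {a b : Letter} {N : Word → VF} (hN : NatF a b N) (c : Letter) :
    NatF a b (fun u => N (c :: u)) := by
  intro p s t q
  exact hN (c :: p) s t q

/-- Gauge: change the letter `b` to `x` at a non-first position. -/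
def g (a : Letter) : Letter → Word → VF
  | x, _ => 1
  | v, u => Y a v (x, x) u * (Y a x (x, x) u)⁻¹

/-- Gauge: change the first letter `a` to `x`. -/
def l : Letter → Word → VF
  | x, _ => 1
  | v, u => Xl v (x, x) u

theorem natF_g (a b : Letter) : NatF a a (g a b) := by
  cases b with
  | x => exact natF_one a
  | v => exact (natF_Y a v (x, x)).mul (natF_Y a x (x, x)).inv

theorem natF_l (a : Letter) : NatF a x (l a) := by
  cases a with
  | x => exact natF_one x
  | v => exact natF_Xl v (x, x)

/-- Naturality in a more convenient form. -/
theorem NatF.eY {a b : Letter} {N : Word → VF} (hN : NatF a b N) (p : Word) (s : Letter) (t : Tgt)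
    (q : Word) : N (p ++ s :: q) * Y b s t q = Y a s t q * N (p ++ t.1 :: t.2 :: q) := by
  simpa [tw] using (hN p s t q).symm

theorem NatF.eg {a b : Letter} {N : Word → VF} (hN : NatF a b N) (p : Word) (s : Letter)
    (q : Word) : N (p ++ s :: q) * g b s q = g a s q * N (p ++ x :: q) := by
  cases s with
  | x => simp [g]
  | v =>
    have h1 := hN.eY p v (x, x) q
    have h2 := hN.eY p x (x, x) q
    simp only [g]
    rw [← mul_assoc, h1, mul_assoc, mul_assoc]
    congr 1
    rw [mul_inv_eq_iff_eq_mul, mul_assoc, h2, inv_mul_cancel_left]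

def xs (n : ℕ) : Word := List.replicate n x

theorem xs_split {m n : ℕ} (h : m < n) : xs (n - m - 1) ++ x :: xs m = xs n := by
  unfold xs
  rw [← List.replicate_succ, List.replicate_append_replicate]
  congr 1
  omega

theorem xs_split' {m n : ℕ} (h : m < n) : xs (n - m - 1) ++ x :: x :: xs m = xs (n + 1) := by
  unfold xs
  rw [← List.replicate_succ, ← List.replicate_succ, List.replicate_append_replicate]
  congr 1
  omega

def RR (s : Letter) (t : Tgt) (u : Word) : VF :=
  (g x s u)⁻¹ * Y x s t u * g x t.2 u * g x t.1 (x :: u)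

def SS (s : Letter) (t : Tgt) (u : Word) : VF := RR s t u * (Y x x (x, x) u)⁻¹

def LL (s : Letter) (t : Tgt) (u : Word) : VF :=
  (l s u)⁻¹ * Xl s t u * g t.1 t.2 u * l t.1 (x :: u)

theorem natF_RR (s : Letter) (t : Tgt) : NatF x x (RR s t) :=
  ((((natF_g x s).inv).mul (natF_Y x s t)).mul (natF_g x t.2)).mul ((natF_g x t.1).cons x)

theorem natF_SS (s : Letter) (t : Tgt) : NatF x x (SS s t) :=
  (natF_RR s t).mul (natF_Y x x (x, x)).inv

theorem natF_LL (s : Letter) (t : Tgt) : NatF x x (LL s t) :=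
  ((((natF_l s).inv).mul (natF_Xl s t)).mul (natF_g t.1 t.2)).mul ((natF_l t.1).cons x)

theorem NatF.eR {a : Letter} {N : Word → VF} (hN : NatF a x N) (p : Word) (s : Letter) (t : Tgt)
    (q : Word) : N (p ++ x :: q) * RR s t q =
      (g a s q)⁻¹ * Y a s t q * g a t.2 q * g a t.1 (x :: q) * N (p ++ x :: x :: q) := by
  have h1 := hN.eg p s q
  have h2 := hN.eY p s t q
  have h3 := hN.eg (p ++ [t.1]) t.2 q
  have h4 := hN.eg p t.1 (x :: q)
  simp only [List.append_assoc, List.singleton_append] at h3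
  unfold RR
  have h1' : N (p ++ x :: q) * (g x s q)⁻¹ = (g a s q)⁻¹ * N (p ++ s :: q) := by
    rw [mul_inv_eq_iff_eq_mul, mul_assoc, h1, inv_mul_cancel_left]
  calc _ = (N (p ++ x :: q) * (g x s q)⁻¹) * Y x s t q * g x t.2 q * g x t.1 (x :: q) := by group
    _ = (g a s q)⁻¹ * (N (p ++ s :: q) * Y x s t q) * g x t.2 q * g x t.1 (x :: q) := by
        rw [h1']; group
    _ = (g a s q)⁻¹ * Y a s t q * (N (p ++ t.1 :: t.2 :: q) * g x t.2 q) * g x t.1 (x :: q) := by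
        rw [h2]; group
    _ = (g a s q)⁻¹ * Y a s t q * g a t.2 q * (N (p ++ t.1 :: x :: q) * g x t.1 (x :: q)) := by
        rw [h3]; group
    _ = _ := by rw [h4]; group

theorem NatF.eS {N : Word → VF} (hN : NatF x x N) (p : Word) (s : Letter) (t : Tgt)
    (q : Word) : N (p ++ x :: q) * SS s t q = SS s t q * N (p ++ x :: q) := by
  have h1 := hN.eR p s t q
  have h2 := hN.eY p x (x, x) q
  have h3 : N (p ++ x :: x :: q) * (Y x x (x, x) q)⁻¹ = (Y x x (x, x) q)⁻¹ * N (p ++ x :: q) := by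
    rw [mul_inv_eq_iff_eq_mul, mul_assoc, h2, inv_mul_cancel_left]
  change _ = RR s t q * N (p ++ x :: x :: q) at h1
  unfold SS
  rw [← mul_assoc, h1, mul_assoc, h3, mul_assoc]

theorem NatF.comm {N : Word → VF} (hN : NatF x x N) {m n : ℕ} (h : m < n) (s : Letter) (t : Tgt) :
    N (xs n) * SS s t (xs m) = SS s t (xs m) * N (xs n) := by
  have := hN.eS (xs (n - m - 1)) s t (xs m)
  rwa [xs_split h] at this

theorem NatF.shift {N : Word → VF} (hN : NatF x x N) {m n : ℕ} (h : m < n) :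
    N (xs n) * Y x x (x, x) (xs m) = Y x x (x, x) (xs m) * N (xs (n + 1)) := by
  have := hN.eY (xs (n - m - 1)) x (x, x) (xs m)
  rwa [xs_split h, xs_split' h] at this

def D0 : VData VF where
  X n := Y x x (x, x) (xs n)
  S s t n := SS s t (xs n)
  L s t n := LL s t (xs n)
  XX h := (natF_Y x x (x, x)).shift h
  XS_hi s t h := ((natF_SS s t).shift h).symm
  XS_lo s t h := (natF_Y x x (x, x)).comm h s t
  XL s t h := ((natF_LL s t).shift h).symm
  SS {m n} s t s' t' h := by
    rcases lt_or_gt_of_ne h with h | h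
    · exact ((natF_SS s' t').comm h s t).symm
    · exact (natF_SS s t).comm h s' t'
  SL s t s' t' h := ((natF_LL s' t').comm h s t).symm

/-- Gauge: change all letters of `u` (following a first letter `a`) to `x`. -/
def cc (a : Letter) : Word → VF
  | [] => 1
  | b :: u => cc a u * g a b (xs u.length)

theorem NatF.ec {a b : Letter} {N : Word → VF} (hN : NatF a b N) (u : Word) : ∀ p : Word,
    N (p ++ u) * cc b u = cc a u * N (p ++ xs u.length) := by
  induction u with
  | nil => intro p; simp [cc, xs]
  | cons c u ih =>
    intro p
    have h1 := ih (p ++ [c])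
    have h2 := hN.eg p c (xs u.length)
    simp only [List.append_assoc, List.singleton_append] at h1
    simp only [cc]
    rw [← mul_assoc, h1, mul_assoc, h2, mul_assoc]
    rfl

def cw (a : Letter) (u : Word) : VF := cc a u * l a (xs u.length)

theorem edgeL (s : Letter) (t : Tgt) (u : Word) :
    cw s u * LL s t (xs u.length) = Xl s t u * cw t.1 (t.2 :: u) := by
  have h1 := (natF_Xl s t).ec u []
  simp only [List.nil_append] at h1
  unfold cw LL
  simp only [cc, List.length_cons]
  calc _ = (cc s u * Xl s t (xs u.length)) * g t.1 t.2 (xs u.length) *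
        l t.1 (x :: xs u.length) := by group
    _ = _ := by
      rw [← h1]
      change _ = _ * (_ * l t.1 (x :: xs u.length))
      group

theorem edgeR (a s : Letter) (t : Tgt) (u : Word) :
    cw a (s :: u) * RR s t (xs u.length) = Y a s t u * cw a (t.1 :: t.2 :: u) := by
  have h1 := (natF_Y a s t).ec u []
  have h2 := (natF_l a).eR [] s t (xs u.length)
  simp only [List.nil_append] at h1 h2
  unfold cw
  simp only [cc, List.length_cons]
  change _ * l a (x :: xs u.length) * _ =
    _ * (cc a u * g a t.2 (xs u.length) * g a t.1 (x :: xs u.length) *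
      l a (x :: x :: xs u.length))
  rw [mul_assoc, h2]
  calc _ = (cc a u * Y a s t (xs u.length)) * g a t.2 (xs u.length) *
        g a t.1 (x :: xs u.length) * l a (x :: x :: xs u.length) := by group
    _ = _ := by rw [← h1]; group

theorem main_tf : TF VF := by
  let J := (Letter × Tgt × ℕ) ⊕ (Letter × Tgt × ℕ)
  let E : Th → J → J → Prop := fun b j j' =>
    (∃ s t m n, m < n ∧ b = Th.x m ∧ j = .inl (s, t, n + 1) ∧ j' = .inl (s, t, n)) ∨
    (∃ s t m n, n < m ∧ b = Th.x m ∧ j = .inl (s, t, n) ∧ j' = .inl (s, t, n)) ∨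
    (∃ s t m n, m < n ∧ b = Th.x m ∧ j = .inr (s, t, n + 1) ∧ j' = .inr (s, t, n))
  let Cm : J → J → Prop := fun j j' =>
    (∃ s t s' t' m n, m ≠ n ∧ j = .inl (s, t, m) ∧ j' = .inl (s', t', n)) ∨
    (∃ s t s' t' m n, m < n ∧ j = .inl (s, t, m) ∧ j' = .inr (s', t', n))
  obtain ⟨T, _, ι, κ, hT, hE, hC, hl⟩ := exists_univ E Cm Th.tf
  let D : VData T :=
    { X := fun n => ι (Th.x n)
      S := fun s t n => κ (.inl (s, t, n))
      L := fun s t n => κ (.inr (s, t, n))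
      XX := fun h => by rw [← map_mul, ← map_mul, Th.rel h]
      XS_hi := fun s t h => hE _ _ _ (Or.inl ⟨s, t, _, _, h, rfl, rfl, rfl⟩)
      XS_lo := fun s t h => hE _ _ _ (Or.inr (Or.inl ⟨s, t, _, _, h, rfl, rfl, rfl⟩))
      XL := fun s t h => hE _ _ _ (Or.inr (Or.inr ⟨s, t, _, _, h, rfl, rfl, rfl⟩))
      SS := fun s t s' t' h => hC _ _ (Or.inl ⟨s, t, s', t', _, _, h, rfl, rfl⟩)
      SL := fun s t s' t' h => hC _ _ (Or.inr ⟨s, t, s', t', _, _, h, rfl, rfl⟩) }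
  obtain ⟨Φ, hΦ1, hΦ2⟩ := hl VF (Th.lift D0.X (fun i j h => D0.XX h))
    (Sum.elim (fun e => D0.S e.1 e.2.1 e.2.2) (fun e => D0.L e.1 e.2.1 e.2.2))
    (by
      rintro b j j' (⟨s, t, m, n, h, rfl, rfl, rfl⟩ | ⟨s, t, m, n, h, rfl, rfl, rfl⟩ |
        ⟨s, t, m, n, h, rfl, rfl, rfl⟩)
      · rw [Th.lift_x]; exact D0.XS_hi s t h
      · rw [Th.lift_x]; exact D0.XS_lo s t h
      · rw [Th.lift_x]; exact D0.XL s t h)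
    (by
      rintro j j' (⟨s, t, s', t', m, n, h, rfl, rfl⟩ | ⟨s, t, s', t', m, n, h, rfl, rfl⟩)
      · exact D0.SS s t s' t' h
      · exact D0.SL s t s' t' h)
  have hX : ∀ n, Φ (D.X n) = Y x x (x, x) (xs n) := fun n => by
    change Φ (ι _) = _
    rw [hΦ1, Th.lift_x]; rfl
  have hS : ∀ s t n, Φ (D.S s t n) = SS s t (xs n) := fun s t n => hΦ2 _
  have hL : ∀ s t n, Φ (D.L s t n) = LL s t (xs n) := fun s t n => hΦ2 _
  have hR : ∀ s t n, Φ (D.R s t n) = RR s t (xs n) := fun s t n => by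
    rw [VData.R, map_mul, hX, hS, SS, inv_mul_cancel_right]
  have hth : ∀ a u, Φ (D.th a u) = cw a u := by
    intro a u
    induction u with
    | nil =>
      cases a with
      | x => simp [VData.th, cw, cc, l]
      | v => simp [VData.th, cw, cc, l, hL, LL, g, Xl, xs]
    | cons b u ih =>
      cases u with
      | nil =>
        have h := edgeL x (a, b) []
        have h0 : Xl x (a, b) [] = 1 := by cases a <;> cases b <;> rfl
        have h1 : cw x [] = 1 := by simp [cw, cc, l]
        rw [h0, h1, one_mul, one_mul] at h
        change Φ (D.L x (a, b) 0) = _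
        rw [hL]
        exact h
      | cons c u =>
        rw [D.th_cons a b (c :: u) (by simp), map_mul, ih, hL, edgeL]
        have h0 : Xl a (a, b) (c :: u) = 1 := by cases a <;> cases b <;> rfl
        rw [h0, one_mul]
  have hEL : ∀ s t u, Φ (D.EL s t u) = Xl s t u := by
    intro s t u
    rw [VData.EL, map_mul, map_mul, map_inv, hth, hth, hL, edgeL, mul_inv_cancel_right]
  have hEE : ∀ a s t u, Φ (D.E a s t u) = Y a s t u := by
    intro a s t u
    rw [VData.E, map_mul, map_mul, map_inv, hth, hth, hR]
    have := edgeR a s t u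
    rw [mul_inv_eq_iff_eq_mul]
    exact this
  refine TF.of_retract D.hom Φ (fun g => ?_) hT
  have hid : Φ.comp D.hom = MonoidHom.id _ := by
    refine PresentedGroup.ext fun y => ?_
    rw [MonoidHom.comp_apply, D.hom_of]
    match y with
    | .fam1 .vv => exact hEL _ _ _
    | .fam1 .vx => exact hEL _ _ _
    | .fam1 .xv => exact hEL _ _ _
    | .fam2 a s t u => exact hEE _ _ _ _
    | .fam3 .xvv ⟨[], h⟩ => exact (h rfl).elim
    | .fam3 .xvx ⟨[], h⟩ => exact (h rfl).elim
    | .fam3 .vxx ⟨[], h⟩ => exact (h rfl).elim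
    | .fam3 .vxv ⟨[], h⟩ => exact (h rfl).elim
    | .fam3 .xvv ⟨b :: u, h⟩ => exact hEL _ _ _
    | .fam3 .xvx ⟨b :: u, h⟩ => exact hEL _ _ _
    | .fam3 .vxx ⟨b :: u, h⟩ => exact hEL _ _ _
    | .fam3 .vxv ⟨b :: u, h⟩ => exact hEL _ _ _
  exact DFunLike.congr_fun hid g

end VFP

/-- VF is torsion-free: every element with gⁿ = 1 for some n ≥ 1 is trivial. -/
theorem VF_torsion_free (g : VF) (n : ℕ) (hn : 1 ≤ n) (h : g ^ n = 1) : g = 1 := by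
  exact VFP.main_tf g n hn h
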